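/- Let K ⊆ R^d be a pointed full-dimensional polyhedral cone with slack matrix A (rows indexed by extreme rays of K), and let a^i denote the i-th row of A. If v ≠ 0 lies in the row span of A and zeroes(a^i) ⊆ zeroes(v) for some i, then v is a nonzero scalar multiple of a^i. -/

import Mathlib

open Matrix Pointwise

/-- The Euclidean dual cone of `K ⊆ ℝ^d`. -/
def eucDual {d : ℕ} (K : Set (Fin d → ℝ)) : Set (Fin d → ℝ) :=
  {y | ∀ x ∈ K, 0 ≤ x ⬝ᵥ y}

/-- A polyhedral cone: nonnegative combinations of finitely many vectors. -/
def IsPolyhedralCone {d : ℕ} (K : Set (Fin d → ℝ)) : Prop :=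
  ∃ (n : ℕ) (v : Fin n → (Fin d → ℝ)),
    K = {x | ∃ c : Fin n → ℝ, (∀ i, 0 ≤ c i) ∧ x = ∑ i, c i • v i}

/-- The convex cone generated by the vectors `v 0, …, v (n-1)`. -/
def coneGenBy {n : ℕ} {V : Type*} [AddCommMonoid V] [Module ℝ V] (v : Fin n → V) : Set V :=
  {x | ∃ c : Fin n → ℝ, (∀ i, 0 ≤ c i) ∧ x = ∑ i, c i • v i}

/-- `r` generates an extreme ray of the cone `K`. -/
def IsExtremeRayGen {d : ℕ} (K : Set (Fin d → ℝ)) (r : Fin d → ℝ) : Prop :=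
  r ≠ 0 ∧ r ∈ K ∧
    ∀ x ∈ K, ∀ y ∈ K, (∃ c : ℝ, 0 ≤ c ∧ x + y = c • r) →
      (∃ a : ℝ, 0 ≤ a ∧ x = a • r) ∧ (∃ b : ℝ, 0 ≤ b ∧ y = b • r)

/-- The family `v` consists of generators of the distinct extreme rays of `K`,
one generator per extreme ray, covering all extreme rays of `K`. -/
def GensDistinctExtremeRays {d n : ℕ} (K : Set (Fin d → ℝ))
    (v : Fin n → (Fin d → ℝ)) : Prop :=
  (∀ i, IsExtremeRayGen K (v i)) ∧
  (∀ i j, i ≠ j → ∀ c : ℝ, v i ≠ c • v j) ∧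
  (∀ r, IsExtremeRayGen K r → ∃ i, ∃ c : ℝ, 0 < c ∧ r = c • v i)

/-- `M` is a slack matrix of the cone `K`: `M i j = ⟨x i, y j⟩` where the `x i`
generate the distinct extreme rays of `K` and the `y j` generate the distinct
extreme rays of the (Euclidean) dual cone of `K`. -/
def IsSlackMatrix {d n m : ℕ} (M : Matrix (Fin n) (Fin m) ℝ)
    (K : Set (Fin d → ℝ)) : Prop :=
  ∃ (x : Fin n → (Fin d → ℝ)) (y : Fin m → (Fin d → ℝ)),
    GensDistinctExtremeRays K x ∧ GensDistinctExtremeRays (eucDual K) y ∧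
    ∀ i j, M i j = x i ⬝ᵥ y j

/-
Every vector of the row span of `A` is `j ↦ u ⬝ᵥ y j` for some `u`, where the `y j` generate the
extreme rays of the dual cone. By Krein–Milman and the bipolar theorem
`K = {x | ∀ j, 0 ≤ x ⬝ᵥ y j}`. If `u` is orthogonal to every `y j` orthogonal to `x i`, then
`x i ± ε • u` satisfies all these inequalities for small `ε > 0`; since `x i` is their midpoint and
extreme, `u` is a multiple of it.
-/

section ProperMap

variable {E F : Type*} [NormedAddCommGroup E] [NormedSpace ℝ E] [FiniteDimensional ℝ E]
  [NormedAddCommGroup F] [NormedSpace ℝ F]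

theorem exists_pos_forall_mul_norm_le_norm_apply (C : ProperCone ℝ E) (f : E →L[ℝ] F)
    (hf : ∀ x ∈ C, f x = 0 → x = 0) : ∃ δ > 0, ∀ x ∈ C, δ * ‖x‖ ≤ ‖f x‖ := by
  have : ProperSpace E := FiniteDimensional.proper_real E
  have hcompact : IsCompact (Metric.sphere (0 : E) 1 ∩ C) :=
    (isCompact_sphere 0 1).inter_right C.isClosed
  have hpos : ∀ x ∈ Metric.sphere (0 : E) 1 ∩ C, 0 < ‖f x‖ := fun x ⟨hx, hxC⟩ =>
    norm_pos_iff.2 fun h => ne_zero_of_mem_unit_sphere ⟨x, hx⟩ (hf x hxC h)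
  obtain ⟨δ, hδ, hδle⟩ := hcompact.exists_forall_le' f.continuous.norm.continuousOn hpos
  refine ⟨δ, hδ, fun x hxC => ?_⟩
  rcases eq_or_ne x 0 with rfl | hx
  · simp
  have hxnorm : 0 < ‖x‖ := norm_pos_iff.2 hx
  have hunit := hδle (‖x‖⁻¹ • x)
    ⟨by simp [norm_smul, hxnorm.ne'], C.smul_mem hxC (inv_nonneg.2 hxnorm.le)⟩
  rwa [map_smul, norm_smul, norm_inv, norm_norm, inv_mul_eq_div, le_div_iff₀ hxnorm] at hunit

theorem isProperMap_restrict_properCone (C : ProperCone ℝ E) (f : E →L[ℝ] F)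
    (hf : ∀ x ∈ C, f x = 0 → x = 0) : IsProperMap fun x : C => f x := by
  have : ProperSpace E := FiniteDimensional.proper_real E
  obtain ⟨δ, hδ, hδle⟩ := exists_pos_forall_mul_norm_le_norm_apply C f hf
  refine isProperMap_iff_tendsto_cocompact.2 ⟨by fun_prop,
    Filter.Tendsto.mono_right (tendsto_norm_atTop_iff_cobounded.1 ?_)
      Metric.cobounded_le_cocompact⟩
  have hnorm : Filter.Tendsto (fun x : C => ‖(x : E)‖) (Filter.cocompact C) Filter.atTop :=
    tendsto_norm_cocompact_atTop.comp C.isClosed.isClosedEmbedding_subtypeVal.tendsto_cocompact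
  exact Filter.tendsto_atTop_mono (fun x => hδle x x.2) (hnorm.const_mul_atTop hδ)

theorem isClosed_image_properCone (C : ProperCone ℝ E) (f : E →L[ℝ] F)
    (hf : ∀ x ∈ C, f x = 0 → x = 0) : IsClosed (f '' C) := by
  have hrange := (isProperMap_restrict_properCone C f hf).isClosedMap.isClosed_range
  rwa [← Function.comp_def f Subtype.val, Set.range_comp, Subtype.range_coe] at hrange

theorem isCompact_properCone_inter_preimage_singleton (C : ProperCone ℝ E) (f : E →L[ℝ] F)
    (hf : ∀ x ∈ C, f x = 0 → x = 0) (b : F) : IsCompact ((C : Set E) ∩ f ⁻¹' {b}) := by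
  have hpre := (isProperMap_restrict_properCone C f hf).isCompact_preimage
    (isCompact_singleton (x := b))
  have himage := hpre.image continuous_subtype_val
  exact Subtype.image_preimage_coe (C : Set E) (f ⁻¹' {b}) ▸ himage

end ProperMap

section FinitelyGenerated

variable {E ι : Type*}

theorem coe_hull_range_eq_setOf_sum {R : Type*} [Semiring R] [PartialOrder R] [IsOrderedRing R]
    [Fintype ι] [AddCommMonoid E] [Module R E] (v : ι → E) :
    (PointedCone.hull R (Set.range v) : Set E) =
      {x | ∃ c : ι → R, (∀ i, 0 ≤ c i) ∧ x = ∑ i, c i • v i} := by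
  ext x
  simp only [SetLike.mem_coe, Submodule.mem_span_range_iff_exists_fun, Set.mem_ofPred_eq]
  constructor
  · rintro ⟨c, rfl⟩
    exact ⟨fun i => c i, fun i => (c i).2, rfl⟩
  · rintro ⟨c, hc, rfl⟩
    exact ⟨fun i => ⟨c i, hc i⟩, rfl⟩

theorem eq_zero_of_sum_eq_zero_of_salient {R : Type*} [Semiring R] [PartialOrder R]
    [IsOrderedRing R] [Fintype ι] [AddCommGroup E] [Module R E] {C : PointedCone R E}
    (hC : (C : ConvexCone R E).Salient) {x : ι → E} (hx : ∀ i, x i ∈ C) (hsum : ∑ i, x i = 0)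
    (i : ι) : x i = 0 := by
  classical
  by_contra hi
  refine hC (x i) (hx i) hi ?_
  rw [← Finset.add_sum_erase _ _ (Finset.mem_univ i)] at hsum
  rw [neg_eq_of_add_eq_zero_right hsum]
  exact C.sum_mem fun j _ => hx j

variable [NormedAddCommGroup E] [NormedSpace ℝ E]

theorem isClosed_hull_range_of_salient [Finite ι] {v : ι → E} (hv : ∀ i, v i ≠ 0)
    (hsalient : (PointedCone.hull ℝ (Set.range v) : ConvexCone ℝ E).Salient) :
    IsClosed (PointedCone.hull ℝ (Set.range v) : Set E) := by
  have := Fintype.ofFinite ι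
  let combination : (ι → ℝ) →L[ℝ] E := (Fintype.linearCombination ℝ v).toContinuousLinearMap
  have himage : (PointedCone.hull ℝ (Set.range v) : Set E) =
      combination '' (ProperCone.positive ℝ (ι → ℝ)) := by
    rw [coe_hull_range_eq_setOf_sum]
    ext x
    exact exists_congr fun c => and_congr_right fun _ => eq_comm
  rw [himage]
  refine isClosed_image_properCone _ combination fun c hc hsum => funext fun i => ?_
  have hmem : ∀ i, c i • v i ∈ PointedCone.hull ℝ (Set.range v) := fun i =>
    PointedCone.smul_mem _ (hc i) (PointedCone.subset_hull ⟨i, rfl⟩)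
  exact (smul_eq_zero.1 (eq_zero_of_sum_eq_zero_of_salient hsalient hmem hsum i)).resolve_right
    (hv i)

theorem isClosed_hull_of_finite_of_salient {s : Set E} (hs : s.Finite)
    (hsalient : (PointedCone.hull ℝ s : ConvexCone ℝ E).Salient) :
    IsClosed (PointedCone.hull ℝ s : Set E) := by
  -- Discard the generator `0`: salience then makes nontrivial nonnegative combinations nonzero.
  have := (hs.subset (Set.sdiff_subset (t := {0}))).to_subtype
  have hrange : PointedCone.hull ℝ (Set.range ((↑) : ↑(s \ {0}) → E)) = PointedCone.hull ℝ s := by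
    rw [Subtype.range_coe]
    exact Submodule.span_sdiff_singleton_zero
  rw [← hrange] at hsalient ⊢
  exact isClosed_hull_range_of_salient (fun x => x.2.2) hsalient

end FinitelyGenerated

theorem IsPolyhedralCone.exists_properCone {d : ℕ} {K : Set (Fin d → ℝ)} (hK : IsPolyhedralCone K)
    (hpointed : K ∩ (-K) = {0}) : ∃ C : ProperCone ℝ (Fin d → ℝ), (C : Set (Fin d → ℝ)) = K := by
  obtain ⟨n, v, rfl⟩ := hK
  rw [← coe_hull_range_eq_setOf_sum] at hpointed ⊢
  exact ⟨⟨_, isClosed_hull_of_finite_of_salient (Set.finite_range v)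
    ((PointedCone.salient_iff_inter_neg_eq_singleton _).2 hpointed)⟩, rfl⟩

section ExtremeRays

theorem eq_smul_of_add_eq_smul_of_mem_extremePoints {𝕜 E : Type*} [Field 𝕜] [LinearOrder 𝕜]
    [IsStrictOrderedRing 𝕜] [AddCommGroup E] [Module 𝕜 E]
    {C : PointedCone 𝕜 E} {φ : E →ₗ[𝕜] 𝕜} (hφ : ∀ x ∈ C, x ≠ 0 → 0 < φ x) {e : E}
    (he : e ∈ ((C : Set E) ∩ φ ⁻¹' {1}).extremePoints 𝕜) {x y : E} (hx : x ∈ C) (hy : y ∈ C)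
    {c : 𝕜} (hxy : x + y = c • e) : x = φ x • e := by
  have hφe : φ e = 1 := he.1.2
  have hφc : φ x + φ y = c := by
    simpa only [map_add, map_smul, hφe, smul_eq_mul, mul_one] using congrArg φ hxy
  rcases eq_or_ne x 0 with rfl | hx0
  · simp
  rcases eq_or_ne y 0 with rfl | hy0
  · rwa [← hφc, map_zero, add_zero, add_zero] at hxy
  have normalize_mem : ∀ z ∈ C, z ≠ 0 → (φ z)⁻¹ • z ∈ (C : Set E) ∩ φ ⁻¹' {1} := fun z hz hz0 =>
    ⟨PointedCone.smul_mem C (inv_nonneg.2 (hφ z hz hz0).le) hz,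
      by simp [(hφ z hz hz0).ne']⟩
  have hφx := hφ x hx hx0
  have hφy := hφ y hy hy0
  have hc : 0 < c := hφc ▸ add_pos hφx hφy
  -- `c • e = x + y` exhibits `e` as the average of the normalized points with weights `φ x`, `φ y`.
  have hsegment : e ∈ openSegment 𝕜 ((φ x)⁻¹ • x) ((φ y)⁻¹ • y) := by
    refine ⟨φ x / c, φ y / c, div_pos hφx hc, div_pos hφy hc, ?_, ?_⟩
    · rw [← add_div, hφc, div_self hc.ne']
    · rw [smul_smul, smul_smul, div_mul_eq_mul_div, div_mul_eq_mul_div, mul_inv_cancel₀ hφx.ne',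
        mul_inv_cancel₀ hφy.ne', ← smul_add, hxy, one_div, inv_smul_smul₀ hc.ne']
  rw [← he.2 (normalize_mem x hx hx0) (normalize_mem y hy hy0) hsegment, smul_inv_smul₀ hφx.ne']

variable {d : ℕ}

theorem isExtremeRayGen_of_mem_extremePoints {C : PointedCone ℝ (Fin d → ℝ)}
    {φ : (Fin d → ℝ) →ₗ[ℝ] ℝ} (hφ : ∀ x ∈ C, x ≠ 0 → 0 < φ x) {e : Fin d → ℝ}
    (he : e ∈ ((C : Set (Fin d → ℝ)) ∩ φ ⁻¹' {1}).extremePoints ℝ) :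
    IsExtremeRayGen (C : Set (Fin d → ℝ)) e := by
  have hφ_nonneg : ∀ x ∈ C, 0 ≤ φ x := fun x hx => by
    rcases eq_or_ne x 0 with rfl | hx0
    · simp
    · exact (hφ x hx hx0).le
  refine ⟨?_, he.1.1, fun x hx y hy ⟨c, _, hxy⟩ => ⟨⟨φ x, hφ_nonneg x hx, ?_⟩,
    ⟨φ y, hφ_nonneg y hy, ?_⟩⟩⟩
  · rintro rfl
    simpa using he.1.2
  · exact eq_smul_of_add_eq_smul_of_mem_extremePoints hφ he hx hy hxy
  · exact eq_smul_of_add_eq_smul_of_mem_extremePoints hφ he hy hx (add_comm x y ▸ hxy)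

theorem properCone_le_of_forall_isExtremeRayGen_mem {C D : ProperCone ℝ (Fin d → ℝ)}
    {φ : StrongDual ℝ (Fin d → ℝ)} (hφ : ∀ x ∈ C, x ≠ 0 → 0 < φ x)
    (hD : ∀ r, IsExtremeRayGen (C : Set (Fin d → ℝ)) r → r ∈ D) : C ≤ D := by
  have hcompact : IsCompact ((C : Set (Fin d → ℝ)) ∩ φ ⁻¹' {1}) :=
    isCompact_properCone_inter_preimage_singleton C φ
      (fun x hx hφx => by_contra fun hx0 => (hφ x hx hx0).ne' hφx) 1
  have hconvex : Convex ℝ ((C : Set (Fin d → ℝ)) ∩ φ ⁻¹' {1}) :=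
    C.convex.inter ((convex_singleton 1).linear_preimage φ.toLinearMap)
  have hslice : (C : Set (Fin d → ℝ)) ∩ φ ⁻¹' {1} ⊆ D := by
    rw [← closure_convexHull_extremePoints hcompact hconvex]
    exact closure_minimal (convexHull_min
      (fun e he => hD e (isExtremeRayGen_of_mem_extremePoints hφ he)) D.convex) D.isClosed
  intro x hx
  rcases eq_or_ne x 0 with rfl | hx0
  · exact D.zero_mem
  have hφx := hφ x hx hx0
  have hmem := hslice ⟨C.smul_mem hx (inv_nonneg.2 hφx.le), by simp [hφx.ne']⟩
  simpa [smul_inv_smul₀ hφx.ne'] using D.smul_mem hmem hφx.le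

end ExtremeRays

section Dual

theorem bijective_dotProductBilin {R ι : Type*} [CommRing R] [TopologicalSpace R]
    [IsTopologicalRing R] [Fintype ι] :
    Function.Bijective fun x : ι → R =>
      (⟨dotProductBilin R R x, continuous_const.dotProduct continuous_id⟩ :
        StrongDual R (ι → R)) := by
  classical
  constructor
  · exact fun x y hxy =>
      (dotProductEquiv R ι).injective (congrArg ContinuousLinearMap.toLinearMap hxy)
  · exact fun f => ⟨(dotProductEquiv R ι).symm f,
      ContinuousLinearMap.coe_injective ((dotProductEquiv R ι).apply_symm_apply f)⟩

instance dotProductBilin_isContPerfPair {R ι : Type*} [CommRing R] [TopologicalSpace R]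
    [IsTopologicalRing R] [Fintype ι] :
    (dotProductBilin R R : (ι → R) →ₗ[R] (ι → R) →ₗ[R] R).IsContPerfPair := by
  have hflip : (dotProductBilin R R : (ι → R) →ₗ[R] (ι → R) →ₗ[R] R).flip =
      dotProductBilin R R := LinearMap.ext₂ fun x y => dotProduct_comm y x
  refine ⟨continuous_fst.dotProduct continuous_snd, bijective_dotProductBilin, ?_⟩
  simp only [hflip]
  exact bijective_dotProductBilin

variable {d : ℕ}

theorem exists_forall_mem_eucDual_dotProduct_pos {K : Set (Fin d → ℝ)}
    (hK : Submodule.span ℝ K = ⊤) : ∃ x, ∀ y ∈ eucDual K, y ≠ 0 → 0 < x ⬝ᵥ y := by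
  obtain ⟨b, hbK, hbspan, -⟩ := Submodule.exists_fun_fin_finrank_span_eq ℝ K
  refine ⟨∑ i, b i, fun y hy hy0 => ?_⟩
  have hnonneg : ∀ i ∈ Finset.univ, 0 ≤ b i ⬝ᵥ y := fun i _ => hy _ (hbK i)
  rw [sum_dotProduct]
  refine (Finset.sum_nonneg hnonneg).lt_of_ne' fun hsum => hy0 ?_
  have horth : ∀ i, b i ⬝ᵥ y = 0 := fun i =>
    (Finset.sum_eq_zero_iff_of_nonneg hnonneg).1 hsum i (Finset.mem_univ i)
  have hspan : Submodule.span ℝ (Set.range b) ≤ LinearMap.ker ((dotProductBilin ℝ ℝ).flip y) :=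
    Submodule.span_le.2 (Set.range_subset_iff.2 horth)
  rw [hbspan, hK] at hspan
  exact dotProduct_self_eq_zero.1 (hspan (Submodule.mem_top (x := y)))

theorem mem_of_forall_isExtremeRayGen_eucDual {C : ProperCone ℝ (Fin d → ℝ)}
    (hC : Submodule.span ℝ (C : Set (Fin d → ℝ)) = ⊤) {w : Fin d → ℝ}
    (hw : ∀ r, IsExtremeRayGen (eucDual C) r → 0 ≤ w ⬝ᵥ r) : w ∈ C := by
  obtain ⟨x, hx⟩ := exists_forall_mem_eucDual_dotProduct_pos hC
  -- The underlying set of this dual cone is `eucDual C` by definition.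
  have hle : ProperCone.dual (dotProductBilin ℝ ℝ) (C : Set (Fin d → ℝ)) ≤
      ProperCone.dual (dotProductBilin ℝ ℝ) {w} :=
    properCone_le_of_forall_isExtremeRayGen_mem
      (φ := (dotProductBilin ℝ ℝ x).toContinuousLinearMap) hx fun r hr => by simpa using hw r hr
  rw [← ProperCone.dual_flip_dual (dotProductBilin ℝ ℝ) C]
  exact fun y hy => hle hy rfl

theorem GensDistinctExtremeRays.mem_of_forall_dotProduct_nonneg {m : ℕ}
    {C : ProperCone ℝ (Fin d → ℝ)} (hC : Submodule.span ℝ (C : Set (Fin d → ℝ)) = ⊤)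
    {y : Fin m → Fin d → ℝ} (hy : GensDistinctExtremeRays (eucDual C) y) {w : Fin d → ℝ}
    (hw : ∀ j, 0 ≤ w ⬝ᵥ y j) : w ∈ C := by
  refine mem_of_forall_isExtremeRayGen_eucDual hC fun r hr => ?_
  obtain ⟨j, c, hc, rfl⟩ := hy.2.2 r hr
  rw [dotProduct_smul]
  exact mul_nonneg hc.le (hw j)

end Dual

theorem exists_pos_forall_mul_abs_le {ι : Type*} [Finite ι] {a b : ι → ℝ} (ha : ∀ j, 0 ≤ a j)
    (hab : ∀ j, a j = 0 → b j = 0) : ∃ ε > 0, ∀ j, ε * |b j| ≤ a j := by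
  have heventually : ∀ j, ∀ᶠ ε in nhdsWithin (0 : ℝ) (Set.Ioi 0), ε * |b j| ≤ a j := by
    intro j
    rcases (ha j).eq_or_lt with hj | hj
    · simp [hab j hj.symm, ← hj]
    · have htendsto : Filter.Tendsto (fun ε => ε * |b j|) (nhdsWithin 0 (Set.Ioi 0)) (nhds 0) := by
        simpa using ((continuous_mul_const |b j|).tendsto 0).mono_left nhdsWithin_le_nhds
      exact (htendsto.eventually_lt_const hj).mono fun _ => le_of_lt
  exact ((Filter.eventually_all.2 heventually).and self_mem_nhdsWithin).exists.imp
    fun _ h => ⟨h.2, h.1⟩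

theorem IsExtremeRayGen.exists_eq_smul_of_zeros_subset {d : ℕ} {ι : Type*} [Finite ι]
    {K : Set (Fin d → ℝ)} {y : ι → Fin d → ℝ} (hK : ∀ w, w ∈ K ↔ ∀ j, 0 ≤ w ⬝ᵥ y j)
    {r u : Fin d → ℝ} (hr : IsExtremeRayGen K r) (hu : ∀ j, r ⬝ᵥ y j = 0 → u ⬝ᵥ y j = 0) :
    ∃ β : ℝ, u = β • r := by
  obtain ⟨ε, hε, hle⟩ := exists_pos_forall_mul_abs_le ((hK r).1 hr.2.1) hu
  have hadd : r + ε • u ∈ K := (hK _).2 fun j => by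
    rw [add_dotProduct, smul_dotProduct, smul_eq_mul]
    nlinarith [hle j, neg_abs_le (u ⬝ᵥ y j)]
  have hsub : r - ε • u ∈ K := (hK _).2 fun j => by
    rw [sub_dotProduct, smul_dotProduct, smul_eq_mul]
    nlinarith [hle j, le_abs_self (u ⬝ᵥ y j)]
  obtain ⟨⟨a, -, ha⟩, -⟩ := hr.2.2 _ hadd _ hsub ⟨2, zero_le_two, by rw [two_smul]; abel⟩
  refine ⟨ε⁻¹ * (a - 1), ?_⟩
  rw [mul_smul, sub_smul, one_smul, ← ha, add_sub_cancel_left, inv_smul_smul₀ hε.ne']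

theorem exists_eq_dotProduct_of_mem_span_rows {R ι κ l : Type*} [CommSemiring R] [Fintype l]
    {x : ι → l → R} {y : κ → l → R} {v : κ → R}
    (hv : v ∈ Submodule.span R (Set.range fun i j => x i ⬝ᵥ y j)) :
    ∃ u : l → R, v = fun j => u ⬝ᵥ y j := by
  have hle : Submodule.span R (Set.range fun i j => x i ⬝ᵥ y j) ≤
      LinearMap.range (LinearMap.pi fun j => (dotProductBilin R R).flip (y j)) :=
    Submodule.span_le.2 (Set.range_subset_iff.2 fun i => ⟨x i, rfl⟩)
  obtain ⟨u, hu⟩ := hle hv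
  exact ⟨u, hu.symm⟩

/-- Let `A` be a slack matrix of a pointed full-dimensional polyhedral
cone `K ⊆ ℝ^d` and let `aⁱ` be its `i`-th row. If `v ≠ 0` lies in the row span of `A`
and the zero set of `aⁱ` is contained in that of `v`, then `v` is a nonzero scalar
multiple of `aⁱ`. -/
theorem slack_row_lemma
    {d n m : ℕ} (K : Set (Fin d → ℝ))
    (hpoly : IsPolyhedralCone K) (hpointed : K ∩ (-K) = {0})
    (hfull : Submodule.span ℝ K = ⊤)
    (A : Matrix (Fin n) (Fin m) ℝ) (hslack : IsSlackMatrix A K)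
    (v : Fin m → ℝ) (hv : v ∈ Submodule.span ℝ (Set.range fun i => A i))
    (hvne : v ≠ 0) (i : Fin n) (hz : ∀ j, A i j = 0 → v j = 0) :
    ∃ β : ℝ, β ≠ 0 ∧ v = β • A i := by
  obtain ⟨x, y, hx, hy, hA⟩ := hslack
  obtain rfl : A = fun i j => x i ⬝ᵥ y j := funext₂ hA
  obtain ⟨C, rfl⟩ := hpoly.exists_properCone hpointed
  have hdual : ∀ w, w ∈ (C : Set (Fin d → ℝ)) ↔ ∀ j, 0 ≤ w ⬝ᵥ y j := fun w =>
    ⟨fun hw j => (hy.1 j).2.1 w hw, hy.mem_of_forall_dotProduct_nonneg hfull⟩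
  obtain ⟨u, rfl⟩ := exists_eq_dotProduct_of_mem_span_rows hv
  obtain ⟨β, rfl⟩ := (hx.1 i).exists_eq_smul_of_zeros_subset hdual hz
  have hrow : (fun j => (β • x i) ⬝ᵥ y j) = β • fun j => x i ⬝ᵥ y j :=
    funext fun j => smul_dotProduct β (x i) (y j)
  refine ⟨β, ?_, hrow⟩
  rintro rfl
  exact hvne (hrow.trans (zero_smul ℝ _))
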